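/- For all integers n ≥ 1 and d ≥ 0, the following two identities hold: (i) (1/n) ∫₀^∞ ∫₀^∞ e^{−(x+y)} (x − y) Σ_{a=0}^{n−1} x^a y^{a+d} / (a! (a+d)!) dx dy = −d, and (ii) (1/n) ∫₀^∞ ∫₀^∞ e^{−(x+y)} (x − y)² Σ_{a=0}^{n−1} x^a y^{a+d} / (a! (a+d)!) dx dy = d² + d + n + 1. Equivalently, if (X,Y) has joint probability density (1/n) e^{−(x+y)} Σ_{a=0}^{n−1} x^a y^{a+d}/(a!(a+d)!) on (0,∞)², then E[X − Y] = −d and E[(X − Y)²] = d² + d + n + 1. -/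

import Mathlib

/-!
Conditionally on the summation index `a`, chosen uniformly in `{0, …, n-1}`, the variables `X` and
`Y` are independent Gamma variables with shapes `a + 1` and `a + d + 1`. Everything therefore reduces
to the monomial moments `∬ e^{-(x+y)} x^p y^q = p! q!` (`hasQuadrantIntegral_monomial`), which give
`E[X - Y | a] = -d` and `E[(X - Y)² | a] = d² + d + 2 + 2a`. Averaging over `a` yields the claim,
since `∑_{a<n} 2a = n (n - 1)`.
-/

open MeasureTheory Filter

noncomputable section

/-- `f` is integrable over the open quadrant `(0,∞)²`, with integral `v`. -/
def HasQuadrantIntegral (f : ℝ × ℝ → ℝ) (v : ℝ) : Prop :=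
  Integrable f ((volume.restrict (Set.Ioi 0)).prod (volume.restrict (Set.Ioi 0))) ∧
    ∫ z, f z ∂((volume.restrict (Set.Ioi 0)).prod (volume.restrict (Set.Ioi 0))) = v

namespace HasQuadrantIntegral

variable {f g : ℝ × ℝ → ℝ} {u v : ℝ}

lemma add (hf : HasQuadrantIntegral f u) (hg : HasQuadrantIntegral g v) :
    HasQuadrantIntegral (fun z => f z + g z) (u + v) :=
  ⟨hf.1.add hg.1, by rw [integral_add hf.1 hg.1, hf.2, hg.2]⟩

lemma const_mul (c : ℝ) (hf : HasQuadrantIntegral f u) :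
    HasQuadrantIntegral (fun z => c * f z) (c * u) :=
  ⟨hf.1.const_mul c, by rw [integral_const_mul, hf.2]⟩

lemma sum {n : ℕ} {F : ℕ → ℝ × ℝ → ℝ} {w : ℕ → ℝ} (h : ∀ a, HasQuadrantIntegral (F a) (w a)) :
    HasQuadrantIntegral (fun z => ∑ a ∈ Finset.range n, F a z) (∑ a ∈ Finset.range n, w a) :=
  ⟨integrable_finsetSum _ fun a _ => (h a).1, by
    rw [integral_finsetSum _ fun a _ => (h a).1]
    exact Finset.sum_congr rfl fun a _ => (h a).2⟩

lemma iterated (hf : HasQuadrantIntegral f u) :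
    ∫ x in Set.Ioi (0 : ℝ), ∫ y in Set.Ioi (0 : ℝ), f (x, y) = u := by
  rw [← hf.2, integral_prod f hf.1]

end HasQuadrantIntegral

lemma integrable_exp_neg_mul_pow (p : ℕ) :
    Integrable (fun x : ℝ => Real.exp (-x) * x ^ p) (volume.restrict (Set.Ioi 0)) := by
  have h := Real.GammaIntegral_convergent (s := (p : ℝ) + 1) (by positivity)
  simpa [IntegrableOn] using h

lemma integral_exp_neg_mul_pow (p : ℕ) :
    ∫ x in Set.Ioi (0 : ℝ), Real.exp (-x) * x ^ p = p.factorial := by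
  rw [← Real.Gamma_nat_eq_factorial, Real.Gamma_eq_integral (by positivity)]
  simp

lemma hasQuadrantIntegral_monomial (p q : ℕ) :
    HasQuadrantIntegral (fun z => Real.exp (-(z.1 + z.2)) * (z.1 ^ p * z.2 ^ q))
      (p.factorial * q.factorial) := by
  have e : (fun z : ℝ × ℝ => Real.exp (-(z.1 + z.2)) * (z.1 ^ p * z.2 ^ q)) =
      fun z => (Real.exp (-z.1) * z.1 ^ p) * (Real.exp (-z.2) * z.2 ^ q) := by
    funext z
    rw [neg_add, Real.exp_add]
    ring
  rw [e]
  refine ⟨(integrable_exp_neg_mul_pow p).mul_prod (integrable_exp_neg_mul_pow q), ?_⟩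
  rw [integral_prod_mul (fun x : ℝ => Real.exp (-x) * x ^ p) fun y : ℝ => Real.exp (-y) * y ^ q,
    integral_exp_neg_mul_pow, integral_exp_neg_mul_pow]

/-- The difference of independent Gamma variables of shapes `a + 1` and `b + 1` has mean `a - b`. -/
lemma hasQuadrantIntegral_sub (a b : ℕ) :
    HasQuadrantIntegral (fun z => Real.exp (-(z.1 + z.2)) * (z.1 - z.2) *
      (z.1 ^ a * z.2 ^ b / ((a.factorial : ℝ) * (b.factorial : ℝ)))) ((a : ℝ) - b) := by
  have h := ((hasQuadrantIntegral_monomial (a + 1) b).add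
    ((hasQuadrantIntegral_monomial a (b + 1)).const_mul (-1))).const_mul
      ((a.factorial : ℝ) * (b.factorial : ℝ))⁻¹
  have ha : (a.factorial : ℝ) ≠ 0 := by positivity
  have hb : (b.factorial : ℝ) ≠ 0 := by positivity
  convert h using 1
  · funext z
    ring
  · simp only [Nat.factorial_succ]
    push_cast
    field_simp
    ring

/-- The second moment of that difference is the squared mean plus the variances `a + 1`, `b + 1`. -/
lemma hasQuadrantIntegral_sub_sq (a b : ℕ) :
    HasQuadrantIntegral (fun z => Real.exp (-(z.1 + z.2)) * (z.1 - z.2) ^ 2 *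
      (z.1 ^ a * z.2 ^ b / ((a.factorial : ℝ) * (b.factorial : ℝ))))
      (((a : ℝ) - b) ^ 2 + (a + 1) + (b + 1)) := by
  have h := (((hasQuadrantIntegral_monomial (a + 2) b).add
    ((hasQuadrantIntegral_monomial (a + 1) (b + 1)).const_mul (-2))).add
      (hasQuadrantIntegral_monomial a (b + 2))).const_mul
        ((a.factorial : ℝ) * (b.factorial : ℝ))⁻¹
  have ha : (a.factorial : ℝ) ≠ 0 := by positivity
  have hb : (b.factorial : ℝ) ≠ 0 := by positivity
  convert h using 1
  · funext z
    ring
  · simp only [Nat.factorial_succ]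
    push_cast
    field_simp
    ring

lemma sum_range_second_moment (n d : ℕ) :
    ∑ a ∈ Finset.range n, (((a : ℝ) - (a + d : ℕ)) ^ 2 + (a + 1) + ((a + d : ℕ) + 1)) =
      n * ((d : ℝ) ^ 2 + d + n + 1) := by
  induction n with
  | zero => simp
  | succ k ih =>
    rw [Finset.sum_range_succ, ih]
    push_cast
    ring

/-- For the joint density `(1/n) e^{-(x+y)} ∑_{a<n} x^a y^{a+d}/(a!(a+d)!)` on `(0,∞)²`
(two squared-radial variables for a product of rectangular Gaussian matrices, `d = nⱼ - n₁`):
`E[X - Y] = -d` and `E[(X-Y)²] = d² + d + n + 1`. -/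
theorem rectangular_radial_moments (n : ℕ) (hn : 1 ≤ n) (d : ℕ) :
    ((n : ℝ)⁻¹ * ∫ x in Set.Ioi (0 : ℝ), ∫ y in Set.Ioi (0 : ℝ),
        Real.exp (-(x + y)) * (x - y) *
          ∑ a ∈ Finset.range n,
            x ^ a * y ^ (a + d) / ((a.factorial : ℝ) * ((a + d).factorial : ℝ))) =
      -(d : ℝ) ∧
    ((n : ℝ)⁻¹ * ∫ x in Set.Ioi (0 : ℝ), ∫ y in Set.Ioi (0 : ℝ),
        Real.exp (-(x + y)) * (x - y) ^ 2 *
          ∑ a ∈ Finset.range n,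
            x ^ a * y ^ (a + d) / ((a.factorial : ℝ) * ((a + d).factorial : ℝ))) =
      (d : ℝ) ^ 2 + d + n + 1 := by
  have hn0 : (n : ℝ) ≠ 0 := by positivity
  simp only [Finset.mul_sum]
  constructor
  · have h := (HasQuadrantIntegral.sum (n := n)
      fun a => hasQuadrantIntegral_sub a (a + d)).iterated
    rw [h]
    simp [hn0]
  · have h := (HasQuadrantIntegral.sum (n := n)
      fun a => hasQuadrantIntegral_sub_sq a (a + d)).iterated
    rw [h, sum_range_second_moment, inv_mul_cancel_left₀ hn0]

end
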